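/- arXiv:2506.21836 — 2 statements merged into one kernel-verified Lean document; each statement's English description precedes it below -/
import Mathlib

section
/- If |X| ≥ 2, the intersection initial segment rule R^IIS does not satisfy tops-only (TO): there exist ≿, ≿' ∈ ℛ(𝔛) with the same best equivalence class such that R^IIS_≿ ≠ R^IIS_{≿'}. -/
/-!
Social ranking solutions (SRSs).  The set of individuals is a finite type `X`;
coalitions are elements of `Finset X` (so the domain of a power relation is the
whole power set `𝔛 = 2^X`).  A weak order `≿ ∈ ℛ(𝔛)` is encoded as a relation
`r : Finset X → Finset X → Prop` together with (when needed) its list of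
equivalence classes `L = [Σ₁, …, Σ_l]` in strictly decreasing order
(`IsClassList r L`).
-/

namespace SocialRanking

variable {X : Type*} [Fintype X] [DecidableEq X]

/-- A weak order: a reflexive, complete and transitive binary relation. -/
def IsWeakOrder {A : Type*} (r : A → A → Prop) : Prop :=
  Reflexive r ∧ (∀ a b, r a b ∨ r b a) ∧ Transitive r

/-- A social ranking solution maps every weak order on `2^X` to a weak order on `X`. -/
def IsSRS (R : (Finset X → Finset X → Prop) → X → X → Prop) : Prop :=
  ∀ r, IsWeakOrder r → IsWeakOrder (R r)

/-- `IsClassList r L` : `L = [Σ₁, …, Σ_l]` is the list of the equivalence classes of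
the weak order `r` on `2^X`, in strictly decreasing order (`≿ : Σ₁ ≻ ⋯ ≻ Σ_l`):
every class is nonempty, every coalition lies in exactly one class, and
`S ≿ T ↔ i ≤ j` whenever `S ∈ Σᵢ` and `T ∈ Σⱼ` (0-based indices). -/
def IsClassList (r : Finset X → Finset X → Prop) (L : List (Finset (Finset X))) : Prop :=
  (∀ C ∈ L, C.Nonempty) ∧
  (∀ S : Finset X, ∃! i : ℕ, i < L.length ∧ S ∈ L.getD i ∅) ∧
  (∀ i j : ℕ, i < L.length → j < L.length →
    ∀ S ∈ L.getD i ∅, ∀ T ∈ L.getD j ∅, (r S T ↔ i ≤ j))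

/-- The asymmetric (strict) part `P` of a relation. -/
def StrictPart {A : Type*} (p : A → A → Prop) (a b : A) : Prop := p a b ∧ ¬ p b a

/-- The symmetric part `I` (indifference) of a relation. -/
def IndiffPart {A : Type*} (p : A → A → Prop) (a b : A) : Prop := p a b ∧ p b a

/-- The restrictions of `p` and `q` to `{x, y}` coincide. -/
def AgreeOn (p q : X → X → Prop) (x y : X) : Prop :=
  ∀ a ∈ ({x, y} : Set X), ∀ b ∈ ({x, y} : Set X), (p a b ↔ q a b)

/-- `|Δ[x]|` : the number of coalitions in `Δ` containing `x`. -/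
def count (Δ : Finset (Finset X)) (x : X) : ℕ := (Δ.filter (fun S => x ∈ S)).card

/-! ### Independence axioms and further axioms -/

/-- WIVIP: for a dichotomous `≿ : Σ₁ ≻ Σ₂`, any `x ∈ ⋂Σ₁` is socially strictly above
any `y ∉ ⋂Σ₁`. -/
def WIVIP (R : (Finset X → Finset X → Prop) → X → X → Prop) : Prop :=
  ∀ (r : Finset X → Finset X → Prop) (C₁ C₂ : Finset (Finset X)),
    IsClassList r [C₁, C₂] →
    ∀ x y : X, (∀ S ∈ C₁, x ∈ S) → (∃ S ∈ C₁, y ∉ S) →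
    StrictPart (R r) x y

/-- IWS (independence from the worst set): if `≿ : Σ₁ ≻ ⋯ ≻ Σ_{l-1} ≻ Σ_l` (`l ≥ 2`)
and `≿'` is obtained from `≿` by partitioning the worst class `Σ_l` into ordered
classes `Γ₁ ≻' ⋯ ≻' Γ_{l'}`, then `x P_≿ y` implies `x P_≿' y`. -/
def IWS (R : (Finset X → Finset X → Prop) → X → X → Prop) : Prop :=
  ∀ (r r' : Finset X → Finset X → Prop) (L Γ : List (Finset (Finset X)))
    (W : Finset (Finset X)),
    L ≠ [] → IsClassList r (L ++ [W]) → IsClassList r' (L ++ Γ) →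
    ∀ x y : X, StrictPart (R r) x y → StrictPart (R r') x y

/-- IBS (independence from the best set): if `≿ : Σ₁ ≻ Σ₂ ≻ ⋯ ≻ Σ_l` (`l ≥ 2`)
and `≿'` is obtained from `≿` by partitioning the best class `Σ₁` into ordered
classes `Γ₁ ≻' ⋯ ≻' Γ_{l'}`, then `x P_≿ y` implies `x P_≿' y`. -/
def IBS (R : (Finset X → Finset X → Prop) → X → X → Prop) : Prop :=
  ∀ (r r' : Finset X → Finset X → Prop) (B : Finset (Finset X))
    (L Γ : List (Finset (Finset X))),
    L ≠ [] → IsClassList r (B :: L) → IsClassList r' (Γ ++ L) →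
    ∀ x y : X, StrictPart (R r) x y → StrictPart (R r') x y

/-- TO (tops-only): two weak orders with the same best equivalence class get the
same social ranking. -/
def TO (R : (Finset X → Finset X → Prop) → X → X → Prop) : Prop :=
  ∀ (r r' : Finset X → Finset X → Prop) (B : Finset (Finset X))
    (L L' : List (Finset (Finset X))),
    IsClassList r (B :: L) → IsClassList r' (B :: L') → R r = R r'

/-- The class list obtained from `L` by sliding `Δ` out of class `k₁` into class `k₂`
(`Σ_{k₁}` is replaced by `Σ_{k₁} \ Δ` and `Σ_{k₂}` by `Σ_{k₂} ∪ Δ`; if `Δ = Σ_{k₁}`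
the emptied class disappears). -/
def slide (L : List (Finset (Finset X))) (k₁ k₂ : ℕ) (Δ : Finset (Finset X)) :
    List (Finset (Finset X)) :=
  ((L.set k₁ ((L.getD k₁ ∅) \ Δ)).set k₂ ((L.getD k₂ ∅) ∪ Δ)).filter
    (fun C => decide (C ≠ ∅))

/-- SI (slide independence): sliding a proper subfamily `Δ ⊊ Σ_{k₁}` with
`|Δ[x]| = |Δ[y]|` into another class does not change the social ranking on `{x, y}`. -/
def SI (R : (Finset X → Finset X → Prop) → X → X → Prop) : Prop :=
  ∀ (r r' : Finset X → Finset X → Prop) (L : List (Finset (Finset X)))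
    (k₁ k₂ : ℕ) (x y : X) (Δ : Finset (Finset X)),
    IsClassList r L → k₁ < L.length → k₂ < L.length →
    Δ ⊂ L.getD k₁ ∅ → count Δ x = count Δ y →
    IsClassList r' (slide L k₁ k₂ Δ) →
    AgreeOn (R r) (R r') x y

/-- SSI (strong slide independence): as SI, but `Δ ⊆ Σ_{k₁}` may be the whole class
(in which case the class disappears). -/
def SSI (R : (Finset X → Finset X → Prop) → X → X → Prop) : Prop :=
  ∀ (r r' : Finset X → Finset X → Prop) (L : List (Finset (Finset X)))
    (k₁ k₂ : ℕ) (x y : X) (Δ : Finset (Finset X)),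
    IsClassList r L → k₁ < L.length → k₂ < L.length →
    Δ ⊆ L.getD k₁ ∅ → count Δ x = count Δ y →
    IsClassList r' (slide L k₁ k₂ Δ) →
    AgreeOn (R r) (R r') x y

/-- Top-SI: the condition of SI restricted to slides out of the best class (`k₁ = 1`,
i.e. index `0`). -/
def TopSI (R : (Finset X → Finset X → Prop) → X → X → Prop) : Prop :=
  ∀ (r r' : Finset X → Finset X → Prop) (L : List (Finset (Finset X)))
    (k₂ : ℕ) (x y : X) (Δ : Finset (Finset X)),
    IsClassList r L → 0 < L.length → k₂ < L.length →
    Δ ⊂ L.getD 0 ∅ → count Δ x = count Δ y →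
    IsClassList r' (slide L 0 k₂ Δ) →
    AgreeOn (R r) (R r') x y

/-- The class list of `≿' : Σ₁ ≻' ⋯ ≻' Σ_{k-1} ≻' Δ ≻' Σ_k \ Δ ≻' ⋯ ≻' Σ_l`
(empty classes disappear). -/
def inuiList (L : List (Finset (Finset X))) (k : ℕ) (Δ : Finset (Finset X)) :
    List (Finset (Finset X)) :=
  (L.take k ++ [Δ, (L.getD k ∅) \ Δ] ++ L.drop (k + 1)).filter
    (fun C => decide (C ≠ ∅))

/-- INUI (independence of non-unanimous improvements). -/
def INUI (R : (Finset X → Finset X → Prop) → X → X → Prop) : Prop :=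
  ∀ (r r' : Finset X → Finset X → Prop) (L : List (Finset (Finset X)))
    (k : ℕ) (Δ : Finset (Finset X)) (x y : X),
    IsClassList r L → k < L.length → Δ ⊆ L.getD k ∅ →
    (∃ S ∈ Δ, x ∉ S) → (∃ S ∈ Δ, y ∉ S) →
    IsClassList r' (inuiList L k Δ) →
    AgreeOn (R r) (R r') x y

/-- The weak order `≿_π := {(π(S), π(T)) : S ≿ T}` induced by a permutation `π` of `X`. -/
def permRel (π : Equiv.Perm X) (r : Finset X → Finset X → Prop) :
    Finset X → Finset X → Prop :=
  fun A B => r (A.image π.symm) (B.image π.symm)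

/-- NT (neutrality). -/
def NT (R : (Finset X → Finset X → Prop) → X → X → Prop) : Prop :=
  ∀ (π : Equiv.Perm X) (r : Finset X → Finset X → Prop), IsWeakOrder r →
    ∀ x y : X, (R (permRel π r) (π x) (π y) ↔ R r x y)

/-- IIC (independence of irrelevant coalitions). -/
def IIC (R : (Finset X → Finset X → Prop) → X → X → Prop) : Prop :=
  ∀ (r r' : Finset X → Finset X → Prop), IsWeakOrder r → IsWeakOrder r' →
    ∀ x y : X,
      (∀ S : Finset X, x ∉ S → y ∉ S →
        (r (insert x S) (insert y S) ↔ r' (insert x S) (insert y S))) →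
      (R r x y ↔ R r' x y)

/-! ### The social ranking solutions -/

/-- `θ_≿(x) = (|Σ₁[x]|, …, |Σ_l[x]|)`. -/
def theta (L : List (Finset (Finset X))) (x : X) : List ℕ := L.map (fun C => count C x)

/-- The lexicographic order `a ≥^L b` on vectors of naturals. -/
def GeLex (a b : List ℕ) : Prop :=
  a = b ∨ ∃ k < a.length, (∀ j < k, a.getD j 0 = b.getD j 0) ∧ b.getD k 0 < a.getD k 0

/-- The dual lexicographic order `a ≥^DL b` (read from the last coordinate;
fewer appearances in worse classes is better). -/
def GeDualLex (a b : List ℕ) : Prop :=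
  a = b ∨ ∃ k < a.length, (∀ j, k < j → a.getD j 0 = b.getD j 0) ∧ a.getD k 0 < b.getD k 0

/-- The lexicographic excellence solution `R^L` : `x R^L_≿ y ↔ θ_≿(x) ≥^L θ_≿(y)`. -/
def RL (r : Finset X → Finset X → Prop) (x y : X) : Prop :=
  ∀ L, IsClassList r L → GeLex (theta L x) (theta L y)

/-- The dual lexicographic excellence solution `R^DL`. -/
def RDL (r : Finset X → Finset X → Prop) (x y : X) : Prop :=
  ∀ L, IsClassList r L → GeDualLex (theta L x) (theta L y)

/-- Plurality `R^P` : `x R^P_≿ y ↔ |Σ₁[x]| ≥ |Σ₁[y]|`. -/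
def RP (r : Finset X → Finset X → Prop) (x y : X) : Prop :=
  ∀ L, IsClassList r L → count (L.getD 0 ∅) y ≤ count (L.getD 0 ∅) x

/-- `e_≿(x)` : the largest `k` such that `x` belongs to every coalition of each of the
first `k` equivalence classes (`0` if `x ∉ T₁`). -/
def eIIS (L : List (Finset (Finset X))) (x : X) : ℕ :=
  (L.takeWhile (fun C => decide (∀ S ∈ C, x ∈ S))).length

/-- The intersection initial segment rule `R^IIS` : `x R^IIS_≿ y ↔ e_≿(x) ≥ e_≿(y)`. -/
def RIIS (r : Finset X → Finset X → Prop) (x y : X) : Prop :=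
  ∀ L, IsClassList r L → eIIS L y ≤ eIIS L x

/-- The constant-`X` rule: everybody is ranked indifferent. -/
def RconstX : (Finset X → Finset X → Prop) → X → X → Prop := fun _ _ _ => True

/-- The split-plurality score `s^split_≿(z) = ∑_{S ∈ Σ₁ : z ∈ S} 1/|S|`. -/
def splitScore (C : Finset (Finset X)) (z : X) : ℚ :=
  ∑ S ∈ C.filter (fun S => z ∈ S), (1 : ℚ) / (S.card : ℚ)

/-- Split-plurality `R^splitP`. -/
def RsplitP (r : Finset X → Finset X → Prop) (x y : X) : Prop :=
  ∀ L, IsClassList r L → splitScore (L.getD 0 ∅) y ≤ splitScore (L.getD 0 ∅) x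

/-- Plurality with tie-breaking by a linear order `t = ▷` :
`x R^{P,▷}_≿ y ↔ (x P^P_≿ y ∨ (x I^P_≿ y ∧ x ▷ y))`. -/
def RPtie (t : X → X → Prop) (r : Finset X → Finset X → Prop) (x y : X) : Prop :=
  ∀ L, IsClassList r L →
    (count (L.getD 0 ∅) y < count (L.getD 0 ∅) x ∨
      (count (L.getD 0 ∅) x = count (L.getD 0 ∅) y ∧ t x y))

/-!
Put the grand coalition `X` alone at the top and everything else in one class below it: then every
individual has `e = 1`, because `∅` lies in the second class. Splitting off the coalition `{x}` as a
second-best class leaves the best class unchanged but raises `e(x)` to `2`, while `e(y)` stays `1`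
for every `y ≠ x`. Since a weak order determines its list of classes, `R^IIS` may be computed from
these two lists.
-/

theorem le_of_lt_imp_lt_of_isLowerSet_range {α : Type*} {f g : α → ℕ}
    (hf : IsLowerSet (Set.range f)) (h : ∀ a b, f a < f b → g a < g b) (a : α) : f a ≤ g a := by
  induction hn : f a generalizing a with
  | zero => exact Nat.zero_le _
  | succ n ih =>
    obtain ⟨b, hb⟩ : n ∈ Set.range f := hf (by lia) (Set.mem_range_self a)
    exact (ih b hb).trans_lt (h b a (by lia))

theorem eq_of_le_iff_le_of_isLowerSet_range {α : Type*} {f g : α → ℕ}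
    (hf : IsLowerSet (Set.range f)) (hg : IsLowerSet (Set.range g))
    (h : ∀ a b, f a ≤ f b ↔ g a ≤ g b) : f = g := by
  have hlt (a b : α) : f a < f b ↔ g a < g b := lt_iff_lt_of_le_iff_le (h b a)
  funext a
  exact (le_of_lt_imp_lt_of_isLowerSet_range hf (fun a b ↦ (hlt a b).1) a).antisymm
    (le_of_lt_imp_lt_of_isLowerSet_range hg (fun a b ↦ (hlt a b).2) a)

theorem lt_length_of_mem_getD {α : Type*} {L : List (Finset α)} {a : α} {i : ℕ}
    (ha : a ∈ L.getD i ∅) : i < L.length := by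
  by_contra! hi
  rw [List.getD_eq_default _ _ hi] at ha
  exact Finset.notMem_empty a ha

theorem existsUnique_mem_getD_of_pairwise_disjoint {α : Type*} {L : List (Finset α)}
    (hdisj : L.Pairwise Disjoint) {a : α} (ha : ∃ C ∈ L, a ∈ C) :
    ∃! i, i < L.length ∧ a ∈ L.getD i ∅ := by
  obtain ⟨C, hC, haC⟩ := ha
  obtain ⟨i, hi, rfl⟩ := List.mem_iff_getElem.1 hC
  refine ⟨i, ⟨hi, by rwa [List.getD_eq_getElem _ _ hi]⟩, fun j ⟨hj, haj⟩ ↦ ?_⟩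
  rw [List.getD_eq_getElem _ _ hj] at haj
  rw [List.pairwise_iff_getElem] at hdisj
  rcases lt_trichotomy j i with hji | hji | hij
  · exact absurd haC (Finset.disjoint_left.1 (hdisj j i hj hi hji) haj)
  · exact hji
  · exact absurd haj (Finset.disjoint_left.1 (hdisj i j hi hj hij) haC)

section ClassList

variable {α : Type*} {r : Finset α → Finset α → Prop} {L L' : List (Finset (Finset α))}

theorem exists_isClassList_of_pairwise_disjoint (hne : ∀ C ∈ L, C.Nonempty)
    (hdisj : L.Pairwise Disjoint) (hcover : ∀ S, ∃ C ∈ L, S ∈ C) : ∃ r, IsClassList r L := by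
  have huniq (S : Finset α) := existsUnique_mem_getD_of_pairwise_disjoint hdisj (hcover S)
  choose rank hmem hrank using huniq
  refine ⟨fun S T ↦ rank S ≤ rank T, hne, fun S ↦ ⟨rank S, hmem S, hrank S⟩, ?_⟩
  intro i j hi hj S hS T hT
  rw [hrank S i ⟨hi, hS⟩, hrank T j ⟨hj, hT⟩]

theorem IsClassList.exists_rank (hL : IsClassList r L) :
    ∃ rank : Finset α → ℕ, (∀ S i, S ∈ L.getD i ∅ ↔ rank S = i) ∧
      (∀ S T, r S T ↔ rank S ≤ rank T) ∧ Set.range rank = Set.Iio L.length := by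
  obtain ⟨hne, huniq, hr⟩ := hL
  choose rank hmem hrank using huniq
  have hiff (S : Finset α) (i : ℕ) : S ∈ L.getD i ∅ ↔ rank S = i :=
    ⟨fun hS ↦ (hrank S i ⟨lt_length_of_mem_getD hS, hS⟩).symm, fun h ↦ h ▸ (hmem S).2⟩
  refine ⟨rank, hiff, fun S T ↦ hr _ _ (hmem S).1 (hmem T).1 S (hmem S).2 T (hmem T).2, ?_⟩
  refine (Set.range_subset_iff.2 fun S ↦ (hmem S).1).antisymm fun i (hi : i < L.length) ↦ ?_
  obtain ⟨S, hS⟩ := hne L[i] (List.getElem_mem hi)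
  exact ⟨S, (hiff S i).1 (by rwa [List.getD_eq_getElem _ _ hi])⟩

theorem IsClassList.unique (hL : IsClassList r L) (hL' : IsClassList r L') : L = L' := by
  obtain ⟨rank, hmem, hle, hrange⟩ := hL.exists_rank
  obtain ⟨rank', hmem', hle', hrange'⟩ := hL'.exists_rank
  obtain rfl : rank = rank' := eq_of_le_iff_le_of_isLowerSet_range
    (hrange ▸ isLowerSet_Iio _) (hrange' ▸ isLowerSet_Iio _)
    fun S T ↦ (hle S T).symm.trans (hle' S T)
  have hlength : L.length = L'.length := Set.Iio_injective (hrange.symm.trans hrange')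
  refine List.ext_getElem hlength fun i hi hi' ↦ ?_
  rw [← List.getD_eq_getElem L ∅ hi, ← List.getD_eq_getElem L' ∅ hi']
  ext S
  rw [hmem, hmem']

end ClassList

section IntersectionInitialSegment

variable {r r' : Finset X → Finset X → Prop} {L L' : List (Finset (Finset X))}
  {B C : Finset (Finset X)} {x y : X}

theorem eIIS_cons_of_forall_mem (hx : ∀ S ∈ C, x ∈ S) : eIIS (C :: L) x = eIIS L x + 1 := by
  rw [eIIS, List.takeWhile_cons_of_pos (by simpa only [decide_eq_true_eq] using hx),
    List.length_cons, eIIS]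

theorem eIIS_cons_of_notMem {S : Finset X} (hS : S ∈ C) (hx : x ∉ S) : eIIS (C :: L) x = 0 := by
  have hC : ¬ ∀ S ∈ C, x ∈ S := fun h ↦ hx (h S hS)
  rw [eIIS, List.takeWhile_cons_of_neg (by simpa only [decide_eq_true_eq] using hC),
    List.length_nil]

theorem IsClassList.riis_iff (hL : IsClassList r L) : RIIS r x y ↔ eIIS L y ≤ eIIS L x :=
  ⟨fun h ↦ h L hL, fun h _ hL' ↦ hL.unique hL' ▸ h⟩

theorem not_to_riis_of_eIIS_le_of_lt (hL : IsClassList r (B :: L)) (hL' : IsClassList r' (B :: L'))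
    (hle : eIIS (B :: L) x ≤ eIIS (B :: L) y) (hlt : eIIS (B :: L') y < eIIS (B :: L') x) :
    ¬ TO (X := X) RIIS := by
  intro hTO
  have hyx : RIIS r y x := hL.riis_iff.2 hle
  rw [hTO r r' B L L' hL hL', hL'.riis_iff] at hyx
  exact hlt.not_ge hyx

end IntersectionInitialSegment

theorem exists_isClassList_pair_compl {B : Finset (Finset X)} (hB : B.Nonempty)
    (hBc : Bᶜ.Nonempty) : ∃ r, IsClassList r [B, Bᶜ] := by
  refine exists_isClassList_of_pairwise_disjoint ?_ ?_ fun S ↦ ?_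
  · simp [hB, hBc]
  · simp [disjoint_compl_right]
  · simpa using em (S ∈ B)

theorem exists_isClassList_triple_compl {B C : Finset (Finset X)} (hB : B.Nonempty)
    (hC : C.Nonempty) (hBC : Disjoint B C) (hBCc : (B ∪ C)ᶜ.Nonempty) :
    ∃ r, IsClassList r [B, C, (B ∪ C)ᶜ] := by
  have hBD : Disjoint B (B ∪ C)ᶜ := disjoint_compl_right.mono_left Finset.subset_union_left
  have hCD : Disjoint C (B ∪ C)ᶜ := disjoint_compl_right.mono_left Finset.subset_union_right
  refine exists_isClassList_of_pairwise_disjoint ?_ ?_ fun S ↦ ?_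
  · simp only [List.forall_mem_cons]
    exact ⟨hB, hC, hBCc, by simp⟩
  · simp only [List.pairwise_cons, List.forall_mem_cons]
    simp [hBC, hBD, hCD, -Finset.compl_union]
  · simp only [List.exists_mem_cons_iff, Finset.mem_compl, Finset.mem_union]
    tauto

/-- If `|X| ≥ 2`, the intersection initial segment rule does not satisfy tops-only. -/
theorem iis_not_to (hX : 2 ≤ Fintype.card X) :
    ¬ TO (X := X) RIIS := by
  have : Nontrivial X := Fintype.one_lt_card_iff_nontrivial.1 hX
  obtain ⟨x, y, hxy⟩ := exists_pair_ne X
  have hne : (∅ : Finset X) ≠ Finset.univ := Finset.univ_nonempty.ne_empty.symm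
  have hsingleton : {x} ∉ ({Finset.univ} : Finset (Finset X)) := by simp
  have hempty : ∅ ∈ ({Finset.univ} : Finset (Finset X))ᶜ := by simp [hne]
  have hempty' : ∅ ∈ ({Finset.univ} ∪ {{x}} : Finset (Finset X))ᶜ := by simp [hne]
  have hunanimous (z : X) : ∀ S ∈ ({Finset.univ} : Finset (Finset X)), z ∈ S := by simp
  obtain ⟨r, hr⟩ := exists_isClassList_pair_compl (Finset.singleton_nonempty _) ⟨∅, hempty⟩
  obtain ⟨r', hr'⟩ := exists_isClassList_triple_compl (Finset.singleton_nonempty _)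
    (Finset.singleton_nonempty _) (Finset.disjoint_singleton_right.2 hsingleton) ⟨∅, hempty'⟩
  refine not_to_riis_of_eIIS_le_of_lt (x := x) (y := y) hr hr' ?_ ?_
  · simp only [eIIS_cons_of_forall_mem (hunanimous _),
      eIIS_cons_of_notMem hempty (Finset.notMem_empty _), le_refl]
  · rw [eIIS_cons_of_forall_mem (hunanimous x), eIIS_cons_of_forall_mem (hunanimous y),
      eIIS_cons_of_forall_mem (C := {{x}}) (x := x) (by simp),
      eIIS_cons_of_notMem (Finset.mem_singleton_self {x}) (Finset.notMem_singleton.2 hxy.symm)]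
    lia

end SocialRanking
end

section
/- If |X| ≥ 3, the plurality SRS R^P satisfies neither independence of non-unanimous improvements (INUI) nor independence of irrelevant coalitions (IIC). -/
/-!
Social ranking solutions (SRSs).  The set of individuals is a finite type `X`;
coalitions are elements of `Finset X` (so the domain of a power relation is the
whole power set `𝔛 = 2^X`).  A weak order `≿ ∈ ℛ(𝔛)` is encoded as a relation
`r : Finset X → Finset X → Prop` together with (when needed) its list of
equivalence classes `L = [Σ₁, …, Σ_l]` in strictly decreasing order
(`IsClassList r L`).
-/

namespace SocialRanking

variable {X : Type*} [Fintype X] [DecidableEq X]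

/-!
INUI fails because plurality ties everybody when all coalitions are indifferent, while improving
`Δ = {∅, {x}}`, which is unanimous for nobody, gives `x` a strict lead.

IIC fails because the grand coalition is never compared by IIC: it is not of the form `S ∪ {x}`
with `S ⊆ X \ {x, y}`. Adding it as a new best class above `{x}` therefore changes no relevant
comparison, but replaces the strict lead of `x` over `y` by a tie.
-/

section ClassOrder

variable {A : Type*} [DecidableEq A]

/-- The position of the first class of `L` that contains `a`. If there is none, it is `L.length`,
so that `classOrder L` puts all uncovered elements into a common worst class. -/
def classIndex (L : List (Finset A)) (a : A) : ℕ := L.findIdx (a ∈ ·)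

/-- The weak order `Σ₁ ≻ ⋯ ≻ Σ_l` whose equivalence classes are listed by `L = [Σ₁, …, Σ_l]`. -/
def classOrder (L : List (Finset A)) (a b : A) : Prop := classIndex L a ≤ classIndex L b

theorem isWeakOrder_classOrder (L : List (Finset A)) : IsWeakOrder (classOrder L) :=
  ⟨fun _ => le_rfl, fun _ _ => le_total _ _, fun _ _ _ => le_trans⟩

theorem classIndex_eq_of_mem {L : List (Finset A)} (hL : L.Pairwise Disjoint) {i : ℕ}
    (hi : i < L.length) {a : A} (ha : a ∈ L.getD i ∅) : classIndex L a = i := by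
  rw [List.getD_eq_getElem _ _ hi] at ha
  refine (List.findIdx_eq hi).2 ⟨decide_eq_true ha, fun j hji => decide_eq_false fun haj => ?_⟩
  exact Finset.disjoint_left.1 (List.pairwise_iff_getElem.1 hL j i (hji.trans hi) hi hji) haj ha

end ClassOrder

theorem isClassList_classOrder {X : Type*} [DecidableEq X] {L : List (Finset (Finset X))}
    (hne : ∀ C ∈ L, C.Nonempty) (hdisj : L.Pairwise Disjoint) (hcover : ∀ S, ∃ C ∈ L, S ∈ C) :
    IsClassList (classOrder L) L := by
  refine ⟨hne, fun S => ?_, fun i j hi hj S hS T hT => ?_⟩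
  · obtain ⟨C, hC, hSC⟩ := hcover S
    obtain ⟨i, hi, rfl⟩ := List.getElem_of_mem hC
    have hSi : S ∈ L.getD i ∅ := by rwa [List.getD_eq_getElem _ _ hi]
    exact ⟨i, ⟨hi, hSi⟩, fun j ⟨hj, hSj⟩ =>
      (classIndex_eq_of_mem hdisj hj hSj).symm.trans (classIndex_eq_of_mem hdisj hi hSi)⟩
  · rw [classOrder, classIndex_eq_of_mem hdisj hi hS, classIndex_eq_of_mem hdisj hj hT]

namespace IsClassList

variable {X : Type*} {r : Finset X → Finset X → Prop} {L : List (Finset (Finset X))}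

theorem mem_getD_zero_iff (h : IsClassList r L) (S : Finset X) :
    S ∈ L.getD 0 ∅ ↔ ∀ T, r S T := by
  obtain ⟨hne, hpart, hr⟩ := h
  obtain ⟨i, ⟨hi, hSi⟩, -⟩ := hpart S
  have hpos : 0 < L.length := Nat.zero_lt_of_lt hi
  constructor
  · intro hS T
    obtain ⟨j, ⟨hj, hTj⟩, -⟩ := hpart T
    exact (hr 0 j hpos hj S hS T hTj).2 (Nat.zero_le j)
  · intro hS
    obtain ⟨T, hT⟩ : (L.getD 0 ∅).Nonempty := by
      rw [List.getD_eq_getElem _ _ hpos]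
      exact hne _ (List.getElem_mem hpos)
    have hi_zero : i = 0 := Nat.le_zero.1 ((hr i 0 hi hpos S hSi T hT).1 (hS T))
    rwa [hi_zero] at hSi

theorem rp_iff [DecidableEq X] {C : Finset (Finset X)} (h : IsClassList r (C :: L)) (x y : X) :
    RP r x y ↔ count C y ≤ count C x := by
  refine ⟨fun hxy => hxy _ h, fun hle L' h' => ?_⟩
  have htop : L'.getD 0 ∅ = C := Finset.ext fun S =>
    (h'.mem_getD_zero_iff S).trans (h.mem_getD_zero_iff S).symm
  rwa [htop]

end IsClassList

theorem isClassList_classOrder_univ :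
    IsClassList (classOrder [Finset.univ (α := Finset X)]) [Finset.univ] :=
  isClassList_classOrder (by simp) (List.pairwise_singleton _ _) (by simp)

theorem isClassList_classOrder_compl {C : Finset (Finset X)} (hC : C.Nonempty)
    (hC' : Cᶜ.Nonempty) : IsClassList (classOrder [C, Cᶜ]) [C, Cᶜ] :=
  isClassList_classOrder (by simp [hC, hC']) (List.pairwise_pair.2 disjoint_compl_right)
    (by simp [em])

theorem isClassList_classOrder_compl_union {C D : Finset (Finset X)} (hC : C.Nonempty)
    (hD : D.Nonempty) (hCD : Disjoint C D) (hrest : (C ∪ D)ᶜ.Nonempty) :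
    IsClassList (classOrder [C, D, (C ∪ D)ᶜ]) [C, D, (C ∪ D)ᶜ] := by
  have hC_rest : Disjoint C (C ∪ D)ᶜ := disjoint_compl_right.mono_left Finset.subset_union_left
  have hD_rest : Disjoint D (C ∪ D)ᶜ := disjoint_compl_right.mono_left Finset.subset_union_right
  refine isClassList_classOrder ?_ ?_ fun S => ?_
  · simp only [List.forall_mem_cons, List.not_mem_nil, IsEmpty.forall_iff, implies_true, and_true,
      hC, hD, hrest]
  · simp only [List.pairwise_cons, List.forall_mem_cons, List.not_mem_nil, IsEmpty.forall_iff,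
      implies_true, List.Pairwise.nil, and_true, hCD, hC_rest, hD_rest]
  · simp [← or_assoc, ← not_or, em]

theorem inuiList_univ {Δ : Finset (Finset X)} (hΔ : Δ.Nonempty) (hΔ' : Δᶜ.Nonempty) :
    inuiList [Finset.univ] 0 Δ = [Δ, Δᶜ] := by
  simp [inuiList, ← Finset.compl_eq_univ_sdiff, hΔ.ne_empty, hΔ'.ne_empty]

theorem count_univ_eq (x y : X) : count Finset.univ x = count Finset.univ y :=
  Finset.card_equiv (Equiv.finsetCongr (Equiv.swap x y)) fun S => by simp

theorem not_inui_rp [Nontrivial X] : ¬ INUI (X := X) RP := by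
  intro hINUI
  obtain ⟨x, y, hxy⟩ := exists_pair_ne X
  let Δ : Finset (Finset X) := {∅, {x}}
  have hempty : ∅ ∈ Δ := by simp [Δ]
  have hΔ' : Δᶜ.Nonempty := ⟨{y}, by simp [Δ, hxy.symm]⟩
  have hsplit : IsClassList (classOrder [Δ, Δᶜ]) [Δ, Δᶜ] :=
    isClassList_classOrder_compl ⟨∅, hempty⟩ hΔ'
  have hiff : RP (classOrder [Finset.univ]) y x ↔ RP (classOrder [Δ, Δᶜ]) y x :=
    hINUI _ _ [Finset.univ] 0 Δ x y isClassList_classOrder_univ Nat.zero_lt_one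
      (Finset.subset_univ Δ) ⟨∅, hempty, Finset.notMem_empty x⟩ ⟨∅, hempty, Finset.notMem_empty y⟩
      (by rwa [inuiList_univ ⟨∅, hempty⟩ hΔ']) y (by simp) x (by simp)
  have htied : RP (classOrder [Finset.univ]) y x :=
    (isClassList_classOrder_univ.rp_iff y x).2 (count_univ_eq x y).le
  have hle : count Δ x ≤ count Δ y := (hsplit.rp_iff y x).1 (hiff.1 htied)
  have hx : count Δ x = 1 := by simp [count, Δ, Finset.filter_insert, Finset.filter_singleton]
  have hy : count Δ y = 0 := by
    simp [count, Δ, Finset.filter_insert, Finset.filter_singleton, hxy.symm]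
  omega

theorem classOrder_insert_iff_of_ne {x y : X} (hxy : x ≠ y) {S : Finset X} (hx : x ∉ S)
    (hy : y ∉ S) :
    classOrder [{Finset.univ}, {{x}}, ({Finset.univ} ∪ {{x}})ᶜ] (insert y S) (insert x S) ↔
      classOrder [{{x}}, {{x}}ᶜ] (insert y S) (insert x S) := by
  have hyS_univ : insert y S ≠ Finset.univ :=
    (ne_of_mem_of_not_mem' (Finset.mem_univ x) (by simp [hx, hxy])).symm
  have hxS_univ : insert x S ≠ Finset.univ :=
    (ne_of_mem_of_not_mem' (Finset.mem_univ y) (by simp [hy, hxy.symm])).symm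
  have hyS_singleton : insert y S ≠ {x} :=
    ne_of_mem_of_not_mem' (Finset.mem_insert_self y S) (by simp [hxy.symm])
  by_cases hxS : insert x S = {x}
  · have hx_univ : {x} ≠ Finset.univ := hxS ▸ hxS_univ
    simp [classOrder, classIndex, List.findIdx_cons, hyS_univ, hyS_singleton, hxS, hx_univ]
  · simp [classOrder, classIndex, List.findIdx_cons, hyS_univ, hyS_singleton, hxS_univ, hxS]

theorem not_iic_rp [Nontrivial X] : ¬ IIC (X := X) RP := by
  intro hIIC
  obtain ⟨x, y, hxy⟩ := exists_pair_ne X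
  have hrest : (({Finset.univ} ∪ {{x}})ᶜ : Finset (Finset X)).Nonempty :=
    ⟨∅, by simp [Finset.univ_nonempty.ne_empty.symm, (Finset.singleton_ne_empty x).symm]⟩
  have hdisj : Disjoint ({Finset.univ} : Finset (Finset X)) {{x}} :=
    Finset.disjoint_singleton.2 (Finset.singleton_ne_univ x).symm
  have htie : IsClassList (classOrder [{Finset.univ}, {{x}}, ({Finset.univ} ∪ {{x}})ᶜ])
      [{Finset.univ}, {{x}}, ({Finset.univ} ∪ {{x}})ᶜ] :=
    isClassList_classOrder_compl_union (Finset.singleton_nonempty _) (Finset.singleton_nonempty _)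
      hdisj hrest
  have hlead : IsClassList (classOrder [{{x}}, {{x}}ᶜ]) [{{x}}, {{x}}ᶜ] :=
    isClassList_classOrder_compl (Finset.singleton_nonempty {x})
      ⟨∅, by simp [(Finset.singleton_ne_empty x).symm]⟩
  have hiff : RP (classOrder [{Finset.univ}, {{x}}, ({Finset.univ} ∪ {{x}})ᶜ]) y x ↔
      RP (classOrder [{{x}}, {{x}}ᶜ]) y x :=
    hIIC _ _ (isWeakOrder_classOrder _) (isWeakOrder_classOrder _) y x
      fun S hy hx => classOrder_insert_iff_of_ne hxy hx hy
  have htied : RP (classOrder [{Finset.univ}, {{x}}, ({Finset.univ} ∪ {{x}})ᶜ]) y x :=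
    (htie.rp_iff y x).2 (by simp [count, Finset.filter_singleton])
  have hle : count {{x}} x ≤ count {{x}} y := (hlead.rp_iff y x).1 (hiff.1 htied)
  simp [count, Finset.filter_singleton, hxy.symm] at hle

theorem plurality_not_inui_iic_general [Nontrivial X] :
    ¬ INUI (X := X) RP ∧ ¬ IIC (X := X) RP :=
  ⟨not_inui_rp, not_iic_rp⟩

/-- If `|X| ≥ 3`, plurality satisfies neither INUI nor IIC. -/
theorem plurality_not_inui_iic (hX : 3 ≤ Fintype.card X) :
    ¬ INUI (X := X) RP ∧ ¬ IIC (X := X) RP := by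
  have : Nontrivial X := Fintype.one_lt_card_iff_nontrivial.1 (Nat.lt_of_succ_lt hX)
  exact plurality_not_inui_iic_general

end SocialRanking
end
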